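/- arXiv:1201.2952 — 4 statements merged into one kernel-verified Lean document; each statement's English description precedes it below -/
import Mathlib

section
/- Let n ≥ 1, let Ω ⊆ ℝ^n be open, let x0 ∈ Ω, and let T : (ℝ^n → ℂ) → ℂ be ℂ-linear. If a sequence (f_k) of functions, each smooth on Ω, represents T on Ω and is asymptotically equicontinuous at x0, then the sequence of values (f_k(x0))_{k∈ℕ} converges in ℂ. (Sequential form of Robinson's theorem that a predistribution with an S-continuous representative at x0 has a finite value at x0.) -/
open MeasureTheory Filter Metric Topology

noncomputable section

/-- A test function on an open set `U ⊆ ℝⁿ`: a smooth function `ℝⁿ → ℂ` whose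
support is compact and contained in `U`. -/
def IsTestFunction {n : ℕ} (U : Set (EuclideanSpace ℝ (Fin n)))
    (φ : EuclideanSpace ℝ (Fin n) → ℂ) : Prop :=
  ContDiff ℝ (⊤ : ℕ∞) φ ∧ HasCompactSupport φ ∧ tsupport φ ⊆ U

/-- A sequence `f k` of functions represents the linear map `T` on `U` if
`∫_U (f k) φ → T φ` for every test function `φ` on `U`. -/
def Represents {n : ℕ} (U : Set (EuclideanSpace ℝ (Fin n)))
    (T : (EuclideanSpace ℝ (Fin n) → ℂ) → ℂ)
    (f : ℕ → EuclideanSpace ℝ (Fin n) → ℂ) : Prop :=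
  ∀ φ : EuclideanSpace ℝ (Fin n) → ℂ, IsTestFunction U φ →
    Tendsto (fun k => ∫ x in U, f k x * φ x) atTop (𝓝 (T φ))

/-- A sequence `f k` is asymptotically equicontinuous at `x0`: for every `ε > 0` there
is `r > 0` with `B(x0,r) ⊆ U` such that
`limsup_k sup_{x ∈ B(x0,r)} ‖f k x - f k x0‖ ≤ ε`, i.e. eventually in `k` we have
`‖f k x - f k x0‖ ≤ ε` for all `x ∈ B(x0,r)`. -/
def AsympEquicontAt {n : ℕ} (U : Set (EuclideanSpace ℝ (Fin n)))
    (f : ℕ → EuclideanSpace ℝ (Fin n) → ℂ) (x0 : EuclideanSpace ℝ (Fin n)) : Prop :=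
  ∀ ε : ℝ, 0 < ε → ∃ r : ℝ, 0 < r ∧ ball x0 r ⊆ U ∧
    ∀ᶠ k in atTop, ∀ x ∈ ball x0 r, ‖f k x - f k x0‖ ≤ ε

/-- A strict delta sequence: smooth compactly supported `ψ k` with `∫ ψ k = 1`,
`supp ψ k ⊆ B(0, r k)` with `r k → 0`, and `sup_k ∫ ‖ψ k‖ < ∞`. -/
def StrictDeltaSeq {n : ℕ} (ψ : ℕ → EuclideanSpace ℝ (Fin n) → ℂ) : Prop :=
  (∀ k, ContDiff ℝ (⊤ : ℕ∞) (ψ k) ∧ HasCompactSupport (ψ k)) ∧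
  (∀ k, ∫ x, ψ k x = 1) ∧
  (∃ r : ℕ → ℝ, Tendsto r atTop (𝓝 0) ∧
    ∀ k, tsupport (ψ k) ⊆ ball (0 : EuclideanSpace ℝ (Fin n)) (r k)) ∧
  (∃ C : ℝ, ∀ k, (∫ x, ‖ψ k x‖) ≤ C)

/-- Sequential form of Robinson's theorem: a predistribution with an asymptotically
equicontinuous representing sequence at `x0` has a finite value at `x0`, i.e. the
values `f k x0` converge. -/
theorem robinson_point_value_exists {n : ℕ} (hn : 1 ≤ n)
    (Ω : Set (EuclideanSpace ℝ (Fin n))) (hΩ : IsOpen Ω)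
    (x0 : EuclideanSpace ℝ (Fin n)) (hx0 : x0 ∈ Ω)
    (T : (EuclideanSpace ℝ (Fin n) → ℂ) → ℂ) (hT : IsLinearMap ℂ T)
    (f : ℕ → EuclideanSpace ℝ (Fin n) → ℂ)
    (hsmooth : ∀ k, ContDiffOn ℝ (⊤ : ℕ∞) (f k) Ω)
    (hrep : Represents Ω T f)
    (hequi : AsympEquicontAt Ω f x0) :
    ∃ c : ℂ, Tendsto (fun k => f k x0) atTop (𝓝 c) := by
  have key : ∀ ε : ℝ, 0 < ε → ∃ c : ℂ, ∀ᶠ k in atTop, ‖f k x0 - c‖ ≤ ε := by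
    intro ε hε
    obtain ⟨r, hr, hrU, hev⟩ := hequi (ε / 2) (by positivity)
    let b : ContDiffBump x0 := ⟨r / 4, r / 2, by positivity, by linarith⟩
    let ψ : EuclideanSpace ℝ (Fin n) → ℝ := b.normed volume
    have hψc : Continuous ψ := b.continuous_normed
    have hψi : Integrable ψ volume := b.integrable_normed
    have hψ0 : ∀ x, 0 ≤ ψ x := fun x => b.nonneg_normed x
    have hts : tsupport ψ = closedBall x0 (r / 2) := b.tsupport_normed_eq
    have htsub : tsupport ψ ⊆ ball x0 r := by
      rw [hts]; exact closedBall_subset_ball (by linarith)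
    have hzero : ∀ x, x ∉ ball x0 r → ψ x = 0 := fun x hx =>
      image_eq_zero_of_notMem_tsupport (fun h => hx (htsub h))
    have hsupp : tsupport (fun x => ((ψ x : ℝ) : ℂ)) ⊆ tsupport ψ := by
      apply closure_mono
      intro x hx
      simp only [Function.mem_support, ne_eq, Complex.ofReal_eq_zero] at hx ⊢
      exact hx
    have htest : IsTestFunction Ω (fun x => ((ψ x : ℝ) : ℂ)) := by
      refine ⟨?_, ?_, (hsupp.trans htsub).trans hrU⟩
      · exact Complex.ofRealCLM.contDiff.comp b.contDiff_normed
      · exact (b.hasCompactSupport_normed (μ := volume)).of_isClosed_subset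
          (isClosed_tsupport _) hsupp
    have hint1 : ∫ x in Ω, ψ x = 1 := by
      rw [setIntegral_eq_integral_of_forall_compl_eq_zero]
      · exact b.integral_normed
      · intro x hx
        exact hzero x (fun h => hx (hrU h))
    have hlim := hrep _ htest
    refine ⟨T (fun x => ((ψ x : ℝ) : ℂ)), ?_⟩
    have h2 : ∀ᶠ k in atTop, ‖(∫ x in Ω, f k x * ((ψ x : ℝ) : ℂ))
        - T (fun x => ((ψ x : ℝ) : ℂ))‖ < ε / 2 := by
      have := (Metric.tendsto_nhds.1 hlim) (ε / 2) (by positivity)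
      simpa only [dist_eq_norm] using this
    filter_upwards [hev, h2] with k hk hk2
    have hψC : Integrable (fun x => ((ψ x : ℝ) : ℂ)) (volume.restrict Ω) :=
      hψi.ofReal.integrableOn
    have hbd : ∀ x, ‖(f k x - f k x0) * ((ψ x : ℝ) : ℂ)‖ ≤ ε / 2 * ψ x := by
      intro x
      by_cases hx : x ∈ ball x0 r
      · rw [norm_mul, Complex.norm_real, Real.norm_of_nonneg (hψ0 x)]
        exact mul_le_mul_of_nonneg_right (hk x hx) (hψ0 x)
      · simp [hzero x hx]
    have hg : Integrable (fun x => ε / 2 * ψ x) (volume.restrict Ω) :=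
      (hψi.const_mul _).integrableOn
    have hdiff : Integrable (fun x => (f k x - f k x0) * ((ψ x : ℝ) : ℂ))
        (volume.restrict Ω) := by
      refine hg.mono' ?_ (Eventually.of_forall hbd)
      refine AEStronglyMeasurable.mul ?_ hψC.aestronglyMeasurable
      exact ((hsmooth k).continuousOn.sub continuousOn_const).aestronglyMeasurable
        hΩ.measurableSet
    have heq : (∫ x in Ω, f k x * ((ψ x : ℝ) : ℂ))
        = (∫ x in Ω, (f k x - f k x0) * ((ψ x : ℝ) : ℂ)) + f k x0 := by
      have h3 : f k x0 = ∫ x in Ω, f k x0 * ((ψ x : ℝ) : ℂ) := by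
        rw [integral_const_mul, integral_complex_ofReal, hint1]; simp
      have h4 := integral_add hdiff (hψC.const_mul (f k x0))
      rw [← h3] at h4
      rw [← h4]
      congr 1
      funext x
      ring
    have hn1 : ‖∫ x in Ω, (f k x - f k x0) * ((ψ x : ℝ) : ℂ)‖ ≤ ε / 2 := by
      have := norm_integral_le_of_norm_le hg (Eventually.of_forall hbd)
      rwa [integral_const_mul, hint1, mul_one] at this
    rw [heq] at hk2
    set A := ∫ x in Ω, (f k x - f k x0) * ((ψ x : ℝ) : ℂ)
    set t := T (fun x => ((ψ x : ℝ) : ℂ))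
    calc ‖f k x0 - t‖ = ‖(A + f k x0 - t) - A‖ := by congr 1; ring
      _ ≤ ‖A + f k x0 - t‖ + ‖A‖ := norm_sub_le _ _
      _ ≤ ε := by linarith
  apply cauchySeq_tendsto_of_complete
  rw [Metric.cauchySeq_iff']
  intro ε hε
  obtain ⟨c, hc⟩ := key (ε / 3) (by positivity)
  obtain ⟨N, hN⟩ := eventually_atTop.1 hc
  refine ⟨N, fun m hm => ?_⟩
  have h1 := hN m hm
  have h2 := hN N le_rfl
  rw [← dist_eq_norm] at h1 h2
  have := dist_triangle_right (f m x0) (f N x0) c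
  linarith
end
end

section
/- Let n ≥ 1, let Ω ⊆ ℝ^n be open, let x0 ∈ Ω, and let T : (ℝ^n → ℂ) → ℂ be ℂ-linear. If (f_k) and (g_k) are two sequences of functions, each smooth on Ω, that both represent T on Ω and are both asymptotically equicontinuous at x0, then lim_{k→∞} f_k(x0) = lim_{k→∞} g_k(x0). (Sequential form of Robinson's theorem that the point value of a predistribution does not depend on the chosen S-continuous representative.) -/
open MeasureTheory Filter Metric Topology

noncomputable section

theorem point_value_aux {n : ℕ} (Ω : Set (EuclideanSpace ℝ (Fin n)))
    (x0 : EuclideanSpace ℝ (Fin n))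
    (T : (EuclideanSpace ℝ (Fin n) → ℂ) → ℂ)
    (f : ℕ → EuclideanSpace ℝ (Fin n) → ℂ)
    (hfsmooth : ∀ k, ContDiffOn ℝ (⊤ : ℕ∞) (f k) Ω)
    (hfrep : Represents Ω T f)
    (hfequi : AsympEquicontAt Ω f x0) (ε : ℝ) (hε : 0 < ε) :
    ∃ r : ℝ, 0 < r ∧ ∀ φ : ContDiffBump x0, φ.rOut < r →
      ∀ᶠ k in atTop, dist (f k x0) (T (fun x => (φ.normed volume x : ℂ))) < ε := by
  obtain ⟨r, hr, hrΩ, hev⟩ := hfequi (ε / 2) (by positivity)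
  refine ⟨r, hr, fun φ hφ => ?_⟩
  set ψ : EuclideanSpace ℝ (Fin n) → ℂ := fun x => (φ.normed volume x : ℂ) with hψ
  have hsub : closedBall x0 φ.rOut ⊆ ball x0 r := closedBall_subset_ball hφ
  have hsupp : Function.support ψ ⊆ closedBall x0 φ.rOut := by
    intro x hx
    have : x ∈ Function.support (φ.normed volume) := by
      intro h
      exact hx (by simp [hψ, h])
    rw [φ.support_normed_eq] at this
    exact ball_subset_closedBall this
  have hts : tsupport ψ ⊆ closedBall x0 φ.rOut :=
    closure_minimal hsupp isClosed_closedBall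
  have hcd : ContDiff ℝ (⊤ : ℕ∞) ψ :=
    Complex.ofRealCLM.contDiff.comp φ.contDiff_normed
  have htest : IsTestFunction Ω ψ :=
    ⟨hcd, HasCompactSupport.intro (isCompact_closedBall x0 φ.rOut)
      (fun x hx => by by_contra h; exact hx (hsupp h)), hts.trans (hsub.trans hrΩ)⟩
  have hT := hfrep ψ htest
  have hT' := (Metric.tendsto_nhds.1 hT) (ε / 2) (by positivity)
  filter_upwards [hev, hT'] with k hk hkT
  have hzero : ∀ x, x ∉ Ω → f k x * ψ x = 0 := by
    intro x hx
    have : ψ x = 0 := by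
      by_contra h
      exact hx (hrΩ (hsub (hsupp h)))
    simp [this]
  rw [setIntegral_eq_integral_of_forall_compl_eq_zero hzero] at hkT
  have hint1 : Integrable (fun x => f k x * ψ x) volume := by
    rw [← integrableOn_iff_integrable_of_support_subset (s := closedBall x0 φ.rOut)]
    · apply ContinuousOn.integrableOn_compact (isCompact_closedBall _ _)
      exact ((hfsmooth k).continuousOn.mono (hsub.trans hrΩ)).mul hcd.continuous.continuousOn
    · exact (Function.support_mul_subset_right _ _).trans hsupp
  have hint2 : Integrable ψ volume := φ.integrable_normed.ofReal
  have hone : ∫ x, ψ x = 1 := by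
    rw [hψ, integral_complex_ofReal, φ.integral_normed]; simp
  have heq : (∫ x, f k x * ψ x) - f k x0 = ∫ x, (f k x - f k x0) * ψ x := by
    have h : ∫ x, f k x0 * ψ x = f k x0 := by
      rw [integral_const_mul, hone, mul_one]
    conv_lhs => rw [← h]
    rw [← integral_sub hint1 (hint2.const_mul _)]
    simp only [sub_mul]
  have hle : ‖∫ x, (f k x - f k x0) * ψ x‖ ≤ ε / 2 := by
    calc _ ≤ ∫ x, ε / 2 * φ.normed volume x := by
          apply norm_integral_le_of_norm_le (φ.integrable_normed.const_mul _)
          refine Eventually.of_forall fun x => ?_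
          by_cases hx : ψ x = 0
          · have := φ.nonneg_normed (μ := volume) x
            rw [hx]; simp; positivity
          · rw [norm_mul]
            have h1 := hk x (hsub (hsupp hx))
            have h2 : ‖ψ x‖ = φ.normed volume x := by
              simp only [hψ, Complex.norm_real]
              exact Real.norm_of_nonneg (φ.nonneg_normed x)
            rw [h2]
            exact mul_le_mul_of_nonneg_right h1 (φ.nonneg_normed x)
      _ = ε / 2 := by rw [integral_const_mul, φ.integral_normed, mul_one]
  rw [← heq, ← dist_eq_norm] at hle
  calc _ ≤ dist (f k x0) (∫ x, f k x * ψ x) + dist (∫ x, f k x * ψ x) (T ψ) := dist_triangle _ _ _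
    _ < ε := by rw [dist_comm (f k x0)]; linarith

/-- Sequential form of Robinson's theorem: the point value of a predistribution does
not depend on the chosen asymptotically equicontinuous representing sequence:
`lim f k x0 = lim g k x0` (both limits exist and are equal). -/
theorem robinson_point_value_unique {n : ℕ} (hn : 1 ≤ n)
    (Ω : Set (EuclideanSpace ℝ (Fin n))) (hΩ : IsOpen Ω)
    (x0 : EuclideanSpace ℝ (Fin n)) (hx0 : x0 ∈ Ω)
    (T : (EuclideanSpace ℝ (Fin n) → ℂ) → ℂ) (hT : IsLinearMap ℂ T)
    (f g : ℕ → EuclideanSpace ℝ (Fin n) → ℂ)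
    (hfsmooth : ∀ k, ContDiffOn ℝ (⊤ : ℕ∞) (f k) Ω)
    (hfrep : Represents Ω T f)
    (hfequi : AsympEquicontAt Ω f x0)
    (hgsmooth : ∀ k, ContDiffOn ℝ (⊤ : ℕ∞) (g k) Ω)
    (hgrep : Represents Ω T g)
    (hgequi : AsympEquicontAt Ω g x0) :
    ∃ c : ℂ, Tendsto (fun k => f k x0) atTop (𝓝 c) ∧
      Tendsto (fun k => g k x0) atTop (𝓝 c) := by
  have key : ∀ ε : ℝ, 0 < ε → ∃ c : ℂ, (∀ᶠ k in atTop, dist (f k x0) c < ε) ∧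
      ∀ᶠ k in atTop, dist (g k x0) c < ε := by
    intro ε hε
    obtain ⟨r, hr, h1⟩ := point_value_aux Ω x0 T f hfsmooth hfrep hfequi ε hε
    obtain ⟨s, hs, h2⟩ := point_value_aux Ω x0 T g hgsmooth hgrep hgequi ε hε
    have hm : 0 < min r s := lt_min hr hs
    let φ : ContDiffBump x0 := ⟨min r s / 4, min r s / 2, by linarith, by linarith⟩
    have hφ : φ.rOut < min r s := by
      change min r s / 2 < min r s
      linarith
    exact ⟨_, h1 φ (hφ.trans_le (min_le_left _ _)), h2 φ (hφ.trans_le (min_le_right _ _))⟩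
  have hc : CauchySeq (fun k => f k x0) := by
    rw [Metric.cauchySeq_iff']
    intro ε hε
    obtain ⟨c, h1, -⟩ := key (ε / 2) (by positivity)
    obtain ⟨N, hN⟩ := eventually_atTop.1 h1
    refine ⟨N, fun k hk => ?_⟩
    have := dist_triangle_right (f k x0) (f N x0) c
    linarith [hN k hk, hN N le_rfl]
  obtain ⟨c, hc⟩ := cauchySeq_tendsto_of_complete hc
  refine ⟨c, hc, ?_⟩
  rw [Metric.tendsto_nhds] at hc ⊢
  intro ε hε
  obtain ⟨d, h1, h2⟩ := key (ε / 3) (by positivity)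
  filter_upwards [hc (ε / 3) (by positivity), h1, h2] with k a1 a2 a3
  have b1 := dist_triangle_right (g k x0) (f k x0) d
  have b2 := dist_triangle (g k x0) (f k x0) c
  linarith
end
end

section
/- Let n ≥ 1, let Ω ⊆ ℝ^n be open, let ω ⊆ Ω be open, let x0 ∈ ω, and let T : (ℝ^n → ℂ) → ℂ be ℂ-linear. Suppose (g_k) is a sequence of functions, each smooth on Ω, representing T on Ω, and (f_k) is a sequence of functions, each smooth on ω, representing T on ω (i.e., ∫_ω f_k φ → T(φ) for every test function φ on ω) and asymptotically equicontinuous at x0. Then there exists a sequence (h_k) of functions, each smooth on Ω, that represents T on Ω, is asymptotically equicontinuous at x0, and satisfies h_k = f_k on a fixed neighborhood of x0 for every k; in particular lim_{k→∞} h_k(x0) = lim_{k→∞} f_k(x0). (Sequential form of the lemma that a linear map admits the Robinson value c at x0 iff its restriction to any open neighborhood ω of x0 admits the Robinson value c at x0, proved by gluing representatives with a cutoff function.) -/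
open MeasureTheory Filter Metric Topology

noncomputable section

lemma aux_integrable {n : ℕ} {U : Set (EuclideanSpace ℝ (Fin n))} (hU : IsOpen U)
    {u φ : EuclideanSpace ℝ (Fin n) → ℂ} (hu : ContinuousOn u U) (hφ : IsTestFunction U φ) :
    Integrable (fun x => u x * φ x) := by
  have hc : Continuous (fun x => u x * φ x) := by
    rw [continuous_iff_continuousAt]
    intro x
    by_cases hx : x ∈ tsupport φ
    · exact (hu.continuousAt (hU.mem_nhds (hφ.2.2 hx))).mul hφ.1.continuous.continuousAt
    · have h0 : (fun x => u x * φ x) =ᶠ[𝓝 x] fun _ => 0 := by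
        filter_upwards [notMem_tsupport_iff_eventuallyEq.mp hx] with y hy
        simp [hy]
      exact continuousAt_const.congr h0.symm
  exact hc.integrable_of_hasCompactSupport hφ.2.1.mul_left

lemma aux_setIntegral {n : ℕ} {U : Set (EuclideanSpace ℝ (Fin n))}
    {u φ : EuclideanSpace ℝ (Fin n) → ℂ} (hφ : IsTestFunction U φ) :
    ∫ x in U, u x * φ x = ∫ x, u x * φ x := by
  apply setIntegral_eq_integral_of_forall_compl_eq_zero
  intro x hx
  have : φ x = 0 := image_eq_zero_of_notMem_tsupport fun h => hx (hφ.2.2 h)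
  simp [this]

lemma aux_limit {n : ℕ} {U : Set (EuclideanSpace ℝ (Fin n))} (hU : IsOpen U)
    {x0 : EuclideanSpace ℝ (Fin n)} {T : (EuclideanSpace ℝ (Fin n) → ℂ) → ℂ}
    {f : ℕ → EuclideanSpace ℝ (Fin n) → ℂ} (hf : ∀ k, ContinuousOn (f k) U)
    (hrep : Represents U T f) (heq : AsympEquicontAt U f x0) :
    ∃ c : ℂ, Tendsto (fun k => f k x0) atTop (𝓝 c) := by
  have key : ∀ ε : ℝ, 0 < ε → ∃ L : ℂ, ∀ᶠ k in atTop, ‖f k x0 - L‖ < 2 * ε := by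
    intro ε hε
    obtain ⟨r, hr, hrU, hk⟩ := heq ε hε
    let b : ContDiffBump x0 := ⟨r / 4, r / 2, by positivity, by linarith⟩
    let ρ : EuclideanSpace ℝ (Fin n) → ℝ := b.normed volume
    let φ : EuclideanSpace ℝ (Fin n) → ℂ := fun x => (ρ x : ℂ)
    have hsupp : tsupport φ ⊆ tsupport ρ := by
      apply closure_mono
      intro x hx hx0
      apply hx
      simp [φ, hx0]
    have hts : tsupport ρ = closedBall x0 (r / 2) := b.tsupport_normed_eq
    have hsub : closedBall x0 (r / 2) ⊆ ball x0 r := closedBall_subset_ball (by linarith)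
    have hφ : IsTestFunction U φ := by
      refine ⟨Complex.ofRealCLM.contDiff.comp b.contDiff_normed, ?_, ?_⟩
      · exact b.hasCompactSupport_normed.of_isClosed_subset (isClosed_tsupport _) hsupp
      · exact hsupp.trans (hts ▸ hsub.trans hrU)
    refine ⟨T φ, ?_⟩
    have hI := hrep φ hφ
    rw [Metric.tendsto_nhds] at hI
    filter_upwards [hk, hI ε hε] with k hk1 hk2
    rw [aux_setIntegral hφ, dist_eq_norm] at hk2
    have h1 : (∫ x, f k x * φ x) - f k x0 = ∫ x, (f k x - f k x0) * φ x := by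
      have : ∫ x, f k x0 * φ x = f k x0 := by
        rw [integral_const_mul]
        have : ∫ x, φ x = 1 := by
          simp only [φ, ρ]
          rw [integral_complex_ofReal, b.integral_normed]; simp
        rw [this, mul_one]
      simp only [sub_mul]
      rw [integral_sub (aux_integrable hU (hf k) hφ)
        (aux_integrable hU continuousOn_const hφ), this]
    have h2 : ‖(∫ x, f k x * φ x) - f k x0‖ ≤ ε := by
      rw [h1]
      have : ∫ x, ε * ρ x = ε := by
        rw [integral_const_mul, b.integral_normed, mul_one]
      rw [← this]
      apply norm_integral_le_of_norm_le (b.integrable_normed.const_mul ε)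
      refine Eventually.of_forall fun x => ?_
      have hρ : 0 ≤ ρ x := b.nonneg_normed x
      rw [norm_mul, Complex.norm_real, Real.norm_of_nonneg hρ]
      by_cases hx : x ∈ tsupport ρ
      · exact mul_le_mul_of_nonneg_right (hk1 x (hsub (hts ▸ hx))) hρ
      · rw [image_eq_zero_of_notMem_tsupport hx, mul_zero]; exact mul_nonneg hε.le hρ
    calc ‖f k x0 - T φ‖ = ‖((∫ x, f k x * φ x) - T φ) - ((∫ x, f k x * φ x) - f k x0)‖ := by
          congr 1; ring
      _ ≤ _ := norm_sub_le _ _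
      _ < 2 * ε := by linarith
  apply cauchySeq_tendsto_of_complete
  rw [Metric.cauchySeq_iff]
  intro ε hε
  obtain ⟨L, hL⟩ := key (ε / 4) (by positivity)
  obtain ⟨N, hN⟩ := eventually_atTop.mp hL
  refine ⟨N, fun m hm k hk => ?_⟩
  have h1 := hN m hm
  have h2 := hN k hk
  rw [← dist_eq_norm] at h1 h2
  have := dist_triangle_right (f m x0) (f k x0) L
  linarith

/-- Sequential form of the localization lemma: if `g` represents `T` on `Ω` and `f`
represents `T` on an open `ω ⊆ Ω` and is asymptotically equicontinuous at `x0 ∈ ω`,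
then there is a sequence `h` representing `T` on `Ω`, asymptotically equicontinuous at
`x0`, agreeing with `f` on a fixed neighborhood of `x0`; in particular
`lim h k x0 = lim f k x0`. -/
theorem robinson_value_local {n : ℕ} (hn : 1 ≤ n)
    (Ω ω : Set (EuclideanSpace ℝ (Fin n))) (hΩ : IsOpen Ω) (hω : IsOpen ω)
    (hωΩ : ω ⊆ Ω)
    (x0 : EuclideanSpace ℝ (Fin n)) (hx0 : x0 ∈ ω)
    (T : (EuclideanSpace ℝ (Fin n) → ℂ) → ℂ) (hT : IsLinearMap ℂ T)
    (g : ℕ → EuclideanSpace ℝ (Fin n) → ℂ)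
    (hgsmooth : ∀ k, ContDiffOn ℝ (⊤ : ℕ∞) (g k) Ω)
    (hgrep : Represents Ω T g)
    (f : ℕ → EuclideanSpace ℝ (Fin n) → ℂ)
    (hfsmooth : ∀ k, ContDiffOn ℝ (⊤ : ℕ∞) (f k) ω)
    (hfrep : Represents ω T f)
    (hfequi : AsympEquicontAt ω f x0) :
    ∃ h : ℕ → EuclideanSpace ℝ (Fin n) → ℂ,
      (∀ k, ContDiffOn ℝ (⊤ : ℕ∞) (h k) Ω) ∧ Represents Ω T h ∧ AsympEquicontAt Ω h x0 ∧
      (∃ V : Set (EuclideanSpace ℝ (Fin n)), V ∈ 𝓝 x0 ∧ ∀ k, ∀ x ∈ V, h k x = f k x) ∧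
      (∃ c : ℂ, Tendsto (fun k => h k x0) atTop (𝓝 c) ∧
        Tendsto (fun k => f k x0) atTop (𝓝 c)) := by
  obtain ⟨r, hr, hrω⟩ := Metric.isOpen_iff.mp hω x0 hx0
  let b : ContDiffBump x0 := ⟨r / 4, r / 2, by positivity, by linarith⟩
  let χ : EuclideanSpace ℝ (Fin n) → ℂ := fun x => ((b x : ℝ) : ℂ)
  have hχ : ContDiff ℝ (⊤ : ℕ∞) χ := Complex.ofRealCLM.contDiff.comp b.contDiff
  have hsupp : tsupport χ ⊆ ω := by
    have h1 : tsupport χ ⊆ tsupport b := by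
      apply closure_mono
      intro x hx hx0
      apply hx
      simp [χ, hx0]
    have h2 : tsupport b = closedBall x0 (r / 2) := b.tsupport_eq
    rw [h2] at h1
    exact h1.trans ((closedBall_subset_ball (by linarith)).trans hrω)
  have hone : ∀ x ∈ ball x0 (r / 4), χ x = 1 := by
    intro x hx
    have : b x = 1 := b.one_of_mem_closedBall (ball_subset_closedBall hx)
    simp [χ, this]
  let h : ℕ → EuclideanSpace ℝ (Fin n) → ℂ := fun k x => χ x * f k x + (1 - χ x) * g k x
  have hhf : ∀ k, ∀ x ∈ ball x0 (r / 4), h k x = f k x := by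
    intro k x hx
    simp [h, hone x hx]
  have hr4 : 0 < r / 4 := by positivity
  refine ⟨h, ?_, ?_, ?_, ⟨ball x0 (r / 4), ball_mem_nhds _ hr4, hhf⟩, ?_⟩
  · intro k x hx
    have hg := (hgsmooth k).contDiffAt (hΩ.mem_nhds hx)
    by_cases hxs : x ∈ tsupport χ
    · have hf := (hfsmooth k).contDiffAt (hω.mem_nhds (hsupp hxs))
      exact ((hχ.contDiffAt.mul hf).add
        ((contDiffAt_const.sub hχ.contDiffAt).mul hg)).contDiffWithinAt
    · have h0 : h k =ᶠ[𝓝 x] g k := by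
        filter_upwards [notMem_tsupport_iff_eventuallyEq.mp hxs] with y hy
        simp [h, hy]
      exact (hg.congr_of_eventuallyEq h0).contDiffWithinAt
  · intro φ hφ
    have hφ1 : IsTestFunction ω (fun x => χ x * φ x) :=
      ⟨hχ.mul hφ.1, hφ.2.1.mul_left, (tsupport_mul_subset_left).trans hsupp⟩
    have hφ1' : IsTestFunction Ω (fun x => χ x * φ x) :=
      ⟨hφ1.1, hφ1.2.1, hφ1.2.2.trans hωΩ⟩
    have hφ2 : IsTestFunction Ω (fun x => (1 - χ x) * φ x) :=
      ⟨(contDiff_const.sub hχ).mul hφ.1, hφ.2.1.mul_left,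
        (tsupport_mul_subset_right).trans hφ.2.2⟩
    have hlim := (hfrep _ hφ1).add (hgrep _ hφ2)
    have hTφ : T (fun x => χ x * φ x) + T (fun x => (1 - χ x) * φ x) = T φ := by
      rw [← hT.map_add]
      congr 1
      funext x
      simp only [Pi.add_apply]
      ring
    rw [hTφ] at hlim
    refine hlim.congr fun k => ?_
    rw [aux_setIntegral hφ1, aux_setIntegral hφ2, aux_setIntegral hφ,
      ← integral_add (aux_integrable hω (hfsmooth k).continuousOn hφ1)
        (aux_integrable hΩ (hgsmooth k).continuousOn hφ2)]
    congr 1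
    funext x
    simp only [h]
    ring
  · intro ε hε
    obtain ⟨s, hs, hsω, hk⟩ := hfequi ε hε
    refine ⟨min s (r / 4), lt_min hs hr4,
      (ball_subset_ball (min_le_left _ _)).trans (hsω.trans hωΩ), ?_⟩
    filter_upwards [hk] with k hk x hx
    rw [hhf k x (ball_subset_ball (min_le_right _ _) hx), hhf k x0 (mem_ball_self hr4)]
    exact hk x (ball_subset_ball (min_le_left _ _) hx)
  · obtain ⟨c, hc⟩ := aux_limit hω (fun k => (hfsmooth k).continuousOn) hfrep hfequi
    exact ⟨c, hc.congr fun k => (hhf k x0 (mem_ball_self hr4)).symm, hc⟩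
end
end

section
/- Let α > 0 and 0 < β < 1, and define f : ℝ → ℂ by f(x) = |x|^{-β} e^{i/|x|^{α}} for x ≠ 0 and f(0) = 0. Then f is locally integrable on ℝ and f has the Łojasiewicz value 0 at 0: for every test function φ on ℝ, ∫_ℝ f(ε x) φ(x) dx → 0 as ε → 0 through nonzero reals. (The case of the family |x|^{-β} e^{i/|x|^{α}}, α, β > 0, in which the function is locally integrable and hence defines a regular distribution.) -/
open MeasureTheory Filter Metric Topology

noncomputable section

def osc (α L x : ℝ) : ℂ := Complex.exp (Complex.I * ((L * x ^ (-α) : ℝ) : ℂ))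

lemma norm_osc (α L x : ℝ) : ‖osc α L x‖ = 1 := by
  unfold osc
  rw [mul_comm]
  exact Complex.norm_exp_ofReal_mul_I _

lemma measurable_osc (α L : ℝ) : Measurable (osc α L) := by
  unfold osc
  fun_prop

lemma integrableOn_osc (α L s R M : ℝ) (hs : -1 < s) (ψ : ℝ → ℂ) (hm : Measurable ψ)
    (hM : ∀ x, ‖ψ x‖ ≤ M) (hR : ∀ x, R < x → ψ x = 0) :
    IntegrableOn (fun x => ((x ^ s : ℝ) : ℂ) * ψ x * osc α L x) (Set.Ioi 0) ∧
    ∫ x in Set.Ioi 0, ‖((x ^ s : ℝ) : ℂ) * ψ x * osc α L x‖ ≤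
      ∫ x in Set.Ioi 0, (Set.Ioc 0 R).indicator (fun x => x ^ s * M) x := by
  have hM0 : 0 ≤ M := (norm_nonneg _).trans (hM 0)
  have h1 : IntegrableOn (fun x : ℝ => x ^ s * M) (Set.Ioc 0 R) := by
    have h := (intervalIntegral.intervalIntegrable_rpow' (a := 0) (b := R) hs).1
    exact h.mul_const M
  have h2 : IntegrableOn ((Set.Ioc 0 R).indicator (fun x : ℝ => x ^ s * M)) (Set.Ioi 0) :=
    ((integrable_indicator_iff measurableSet_Ioc).2 h1).integrableOn
  have hb : ∀ x ∈ Set.Ioi (0:ℝ), ‖((x ^ s : ℝ) : ℂ) * ψ x * osc α L x‖ ≤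
      (Set.Ioc 0 R).indicator (fun x : ℝ => x ^ s * M) x := by
    intro x hx
    have hx0 : 0 < x := hx
    rw [norm_mul, norm_mul, norm_osc, mul_one, Complex.norm_real, Real.norm_of_nonneg (by positivity)]
    by_cases hxR : x ≤ R
    · rw [Set.indicator_of_mem (show x ∈ Set.Ioc 0 R from ⟨hx, hxR⟩)]
      have := hM x
      gcongr
    · rw [hR x (by linarith), Set.indicator_of_notMem (fun h => hxR h.2)]
      simp
  have hI : IntegrableOn (fun x => ((x ^ s : ℝ) : ℂ) * ψ x * osc α L x) (Set.Ioi 0) := by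
    refine Integrable.mono' h2 ?_ ((ae_restrict_iff' measurableSet_Ioi).2 (Eventually.of_forall hb))
    have := measurable_osc α L
    exact Measurable.aestronglyMeasurable (by fun_prop)
  exact ⟨hI, setIntegral_mono_on hI.norm h2 measurableSet_Ioi hb⟩

lemma compact_bounds (ψ : ℝ → ℂ) (hψ : ContDiff ℝ (⊤ : ℕ∞) ψ) (hc : HasCompactSupport ψ) :
    ∃ R M : ℝ, (∀ x, ‖ψ x‖ ≤ M) ∧ (∀ x, R < x → ψ x = 0) := by
  obtain ⟨M, hM⟩ := hc.exists_bound_of_continuous hψ.continuous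
  obtain ⟨R, hR⟩ := hc.isCompact.bddAbove
  refine ⟨R, M, hM, fun x hx => ?_⟩
  by_contra h
  exact absurd (hR (subset_tsupport _ h)) (not_le.2 hx)

lemma hasDerivAt_osc (α L x : ℝ) (hx : 0 < x) :
    HasDerivAt (osc α L) (osc α L x * (Complex.I * ((L * ((-α) * x ^ (-α - 1)) : ℝ) : ℂ))) x := by
  unfold osc
  exact (((Real.hasDerivAt_rpow_const (Or.inl hx.ne')).const_mul L).ofReal_comp.const_mul
    Complex.I).cexp

def II (α s L : ℝ) (ψ : ℝ → ℂ) : ℂ :=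
  ∫ x in Set.Ioi (0:ℝ), ((x ^ s : ℝ) : ℂ) * ψ x * osc α L x

lemma II_parts (α s L : ℝ) (hα : 0 < α) (hs : -1 < s) (ψ : ℝ → ℂ)
    (hψ : ContDiff ℝ (⊤ : ℕ∞) ψ) (hc : HasCompactSupport ψ) :
    Complex.I * (L * α) * II α s L ψ =
      (s + α + 1) * II α (s + α) L ψ + II α (s + α + 1) L (deriv ψ) := by
  have hψ' : ContDiff ℝ (⊤ : ℕ∞) (deriv ψ) := by
    exact ((contDiff_infty_iff_deriv (𝕜 := ℝ)).1 hψ).2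
  obtain ⟨R, M, hM, hR⟩ := compact_bounds ψ hψ hc
  obtain ⟨R', M', hM', hR'⟩ := compact_bounds (deriv ψ) hψ' hc.deriv
  have i1 := (integrableOn_osc α L s R M hs ψ hψ.continuous.measurable hM hR).1
  have i2 := (integrableOn_osc α L (s + α) R M (by linarith) ψ hψ.continuous.measurable hM hR).1
  have i3 := (integrableOn_osc α L (s + α + 1) R' M' (by linarith) (deriv ψ)
    hψ'.continuous.measurable hM' hR').1
  have i12 := (i2.const_mul ((s : ℂ) + α + 1)).add i3
  have i123 := i12.sub (i1.const_mul (Complex.I * (L * α)))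
  have key := integral_Ioi_of_hasDerivAt_of_tendsto (a := (0:ℝ)) (m := (0:ℂ))
    (f := fun x => ((x ^ (s + α + 1) : ℝ) : ℂ) * ψ x * osc α L x) ?_ ?_ i123 ?_
  · simp only [Pi.add_apply, Pi.sub_apply] at key
    rw [integral_sub, integral_add, integral_const_mul, integral_const_mul] at key
    · rw [Real.zero_rpow (by linarith)] at key
      simp only [Complex.ofReal_zero, zero_mul, sub_zero] at key
      unfold II
      rw [sub_eq_zero] at key
      exact key.symm
    · exact i2.const_mul _
    · exact i3
    · exact i12
    · exact i1.const_mul _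
  · unfold ContinuousWithinAt
    beta_reduce
    rw [Real.zero_rpow (by linarith)]
    simp only [Complex.ofReal_zero, zero_mul]
    rw [tendsto_zero_iff_norm_tendsto_zero]
    have : Tendsto (fun x : ℝ => |x ^ (s + α + 1)| * M) (𝓝[Set.Ici 0] 0) (𝓝 0) := by
      have h : ContinuousAt (fun x : ℝ => |x ^ (s + α + 1)| * M) 0 :=
        ((Real.continuousAt_rpow_const 0 (s + α + 1) (Or.inr (by linarith))).abs).mul
          continuousAt_const
      have h2 := h.tendsto
      rw [Real.zero_rpow (by linarith)] at h2
      simp only [abs_zero, zero_mul] at h2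
      exact h2.mono_left nhdsWithin_le_nhds
    refine squeeze_zero (fun _ => norm_nonneg _) (fun x => ?_) this
    rw [norm_mul, norm_mul, norm_osc, mul_one, Complex.norm_real, Real.norm_eq_abs]
    have := hM x
    gcongr
  · intro x hx
    have hx0 : 0 < x := hx
    have hd := (((Real.hasDerivAt_rpow_const (p := s + α + 1) (Or.inl hx0.ne')).ofReal_comp.mul
      ((hψ.differentiable (by simp)) x).hasDerivAt).mul (hasDerivAt_osc α L x hx0))
    refine HasDerivAt.congr_deriv hd ?_
    have e1 : x ^ s = x ^ (s + α + 1) * x ^ (-α - 1) := by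
      rw [← Real.rpow_add hx0]; congr 1; ring
    simp only [Pi.add_apply, Pi.sub_apply, Pi.mul_apply]
    rw [e1, add_sub_cancel_right]
    push_cast
    ring
  · refine tendsto_const_nhds.congr' ?_
    filter_upwards [eventually_gt_atTop R] with x hx
    simp [hR x hx]

lemma II_bound (α : ℝ) (hα : 0 < α) (N : ℕ) : ∀ (s : ℝ) (_ : -1 < s) (ψ : ℝ → ℂ)
    (_ : ContDiff ℝ (⊤ : ℕ∞) ψ) (_ : HasCompactSupport ψ),
    ∃ C : ℝ, ∀ L : ℝ, 0 < L → L ^ N * ‖II α s L ψ‖ ≤ C := by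
  induction N with
  | zero =>
    intro s hs ψ hψ hc
    obtain ⟨R, M, hM, hR⟩ := compact_bounds ψ hψ hc
    refine ⟨∫ x in Set.Ioi 0, (Set.Ioc 0 R).indicator (fun x => x ^ s * M) x, fun L hL => ?_⟩
    rw [pow_zero, one_mul]
    exact (norm_integral_le_integral_norm _).trans
      (integrableOn_osc α L s R M hs ψ hψ.continuous.measurable hM hR).2
  | succ N ih =>
    intro s hs ψ hψ hc
    have hψ' : ContDiff ℝ (⊤ : ℕ∞) (deriv ψ) :=
      ((contDiff_infty_iff_deriv (𝕜 := ℝ)).1 hψ).2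
    obtain ⟨C1, h1⟩ := ih (s + α) (by linarith) ψ hψ hc
    obtain ⟨C2, h2⟩ := ih (s + α + 1) (by linarith) (deriv ψ) hψ' hc.deriv
    refine ⟨((s + α + 1) * C1 + C2) / α, fun L hL => ?_⟩
    have hp := congrArg norm (II_parts α s L hα hs ψ hψ hc)
    have hsp : 0 < s + α + 1 := by linarith
    have e : ((s : ℂ) + α + 1) = ((s + α + 1 : ℝ) : ℂ) := by push_cast; rfl
    have hle : L * α * ‖II α s L ψ‖ ≤
        (s + α + 1) * ‖II α (s + α) L ψ‖ + ‖II α (s + α + 1) L (deriv ψ)‖ := by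
      calc L * α * ‖II α s L ψ‖ = ‖Complex.I * (L * α) * II α s L ψ‖ := by
            simp [abs_of_pos hL, abs_of_pos hα]
        _ ≤ _ := by
            rw [hp]
            refine (norm_add_le _ _).trans (le_of_eq ?_)
            rw [norm_mul, e, Complex.norm_real, Real.norm_of_nonneg hsp.le]
    rw [le_div_iff₀ hα]
    have hLN : 0 < L ^ N := by positivity
    calc L ^ (N + 1) * ‖II α s L ψ‖ * α = L ^ N * (L * α * ‖II α s L ψ‖) := by ring
      _ ≤ L ^ N * ((s + α + 1) * ‖II α (s + α) L ψ‖ + ‖II α (s + α + 1) L (deriv ψ)‖) := by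
          gcongr
      _ = (s + α + 1) * (L ^ N * ‖II α (s + α) L ψ‖) +
            L ^ N * ‖II α (s + α + 1) L (deriv ψ)‖ := by ring
      _ ≤ _ := by
          have := h1 L hL
          have := h2 L hL
          gcongr

lemma split_integral (h : ℝ → ℂ) (h1 : IntegrableOn h (Set.Ioi 0))
    (h2 : IntegrableOn (fun x => h (-x)) (Set.Ioi 0)) :
    Integrable h ∧ ∫ x, h x = (∫ x in Set.Ioi 0, h x) + ∫ x in Set.Ioi 0, h (-x) := by
  have h3 : IntegrableOn h (Set.Iic 0) := by
    rw [integrableOn_Iic_iff_integrableOn_Iio]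
    have := (Measure.measurePreserving_neg (volume : Measure ℝ)).integrableOn_comp_preimage
      (Homeomorph.neg ℝ).measurableEmbedding (f := h) (s := Set.Iio 0)
    rw [← this]
    simpa [Function.comp_def] using h2
  refine ⟨?_, ?_⟩
  · rw [← integrableOn_univ, ← Set.Iic_union_Ioi (a := (0:ℝ))]
    exact h3.union h1
  · rw [← intervalIntegral.integral_Iic_add_Ioi h3 h1, integral_comp_neg_Ioi, neg_zero, add_comm]

/-- For `α > 0` and `0 < β < 1`, the function `f x = |x|^{-β} e^{i/|x|^α}` (with
`f 0 = 0`) is locally integrable on `ℝ` and has the Łojasiewicz value `0` at `0`: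
`∫ f (ε x) φ x dx → 0` as `ε → 0` through nonzero reals, for every test function `φ`. -/
theorem lojasiewicz_value_oscillatory_family (α β : ℝ) (hα : 0 < α)
    (hβ0 : 0 < β) (hβ1 : β < 1) (f : ℝ → ℂ)
    (hf0 : f 0 = 0)
    (hf : ∀ x : ℝ, x ≠ 0 →
      f x = (|x| ^ (-β) : ℝ) * Complex.exp (Complex.I / ((|x| ^ α : ℝ) : ℂ))) :
    LocallyIntegrable f volume ∧
    (∀ φ : ℝ → ℂ, ContDiff ℝ (⊤ : ℕ∞) φ → HasCompactSupport φ →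
      Tendsto (fun ε : ℝ => ∫ x, f (ε * x) * φ x) (𝓝[≠] (0 : ℝ)) (𝓝 0)) := by
  have hpos : ∀ ε x : ℝ, ε ≠ 0 → x ≠ 0 → f (ε * x) =
      ((|ε| ^ (-β) : ℝ) : ℂ) * (((|x| ^ (-β) : ℝ) : ℂ) * osc α (|ε| ^ (-α)) |x|) := by
    intro ε x hε hx
    rw [hf _ (mul_ne_zero hε hx), abs_mul, osc,
      ← Real.mul_rpow (abs_nonneg _) (abs_nonneg _), Real.rpow_neg (by positivity) α, div_eq_mul_inv,
      Real.mul_rpow (z := -β) (abs_nonneg _) (abs_nonneg _)]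
    push_cast
    ring
  -- the two halves
  have hhalf : ∀ (ε : ℝ) (ψ : ℝ → ℂ), ε ≠ 0 → ∀ x ∈ Set.Ioi (0:ℝ), f (ε * x) * ψ x =
      ((|ε| ^ (-β) : ℝ) : ℂ) * (((x ^ (-β) : ℝ) : ℂ) * ψ x * osc α (|ε| ^ (-α)) x) := by
    intro ε ψ hε x hx
    have hx0 : 0 < x := hx
    rw [hpos ε x hε hx0.ne', abs_of_pos hx0]
    ring
  have hhalf' : ∀ (ε : ℝ) (ψ : ℝ → ℂ), ε ≠ 0 → ∀ x ∈ Set.Ioi (0:ℝ), f (ε * -x) * ψ (-x) =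
      ((|ε| ^ (-β) : ℝ) : ℂ) * (((x ^ (-β) : ℝ) : ℂ) * ψ (-x) * osc α (|ε| ^ (-α)) x) := by
    intro ε ψ hε x hx
    have hx0 : 0 < x := hx
    rw [hpos ε (-x) hε (neg_ne_zero.2 hx0.ne'), abs_neg, abs_of_pos hx0]
    ring
  have hsplit : ∀ (ε R M : ℝ) (ψ : ℝ → ℂ), ε ≠ 0 → Measurable ψ → (∀ x, ‖ψ x‖ ≤ M) →
      (∀ x, R < x → ψ x = 0) → (∀ x, R < x → ψ (-x) = 0) →
      Integrable (fun x => f (ε * x) * ψ x) ∧ ∫ x, f (ε * x) * ψ x =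
        ((|ε| ^ (-β) : ℝ) : ℂ) * (II α (-β) (|ε| ^ (-α)) ψ +
          II α (-β) (|ε| ^ (-α)) (fun x => ψ (-x))) := by
    intro ε R M ψ hε hm hM hR hR'
    have i1 := (integrableOn_osc α (|ε| ^ (-α)) (-β) R M (by linarith) ψ hm hM hR).1
    have i2 := (integrableOn_osc α (|ε| ^ (-α)) (-β) R M (by linarith) (fun x => ψ (-x))
      (by fun_prop) (fun x => hM _) hR').1
    have j1 := (integrableOn_congr_fun (hhalf ε ψ hε) measurableSet_Ioi (μ := volume)).2
      (i1.const_mul _)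
    have j2 := (integrableOn_congr_fun (hhalf' ε ψ hε) measurableSet_Ioi (μ := volume)).2
      (i2.const_mul _)
    obtain ⟨k1, k2⟩ := split_integral (fun x => f (ε * x) * ψ x) j1 j2
    refine ⟨k1, k2.trans ?_⟩
    rw [setIntegral_congr_fun measurableSet_Ioi (hhalf ε ψ hε),
      setIntegral_congr_fun measurableSet_Ioi (hhalf' ε ψ hε), integral_const_mul,
      integral_const_mul, ← mul_add]
    rfl
  constructor
  · rw [locallyIntegrable_iff]
    intro K hK
    obtain ⟨R, hR⟩ := hK.isBounded.subset_closedBall 0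
    rw [Real.closedBall_eq_Icc, zero_sub, zero_add] at hR
    refine IntegrableOn.mono_set ?_ hR
    rw [← integrable_indicator_iff measurableSet_Icc]
    have := (hsplit 1 R 1 ((Set.Icc (-R) R).indicator 1) one_ne_zero
      (measurable_one.indicator measurableSet_Icc) ?_ ?_ ?_).1
    · refine this.congr (Eventually.of_forall fun x => ?_)
      by_cases hx : x ∈ Set.Icc (-R) R <;> simp [hx]
    · intro x
      by_cases hx : x ∈ Set.Icc (-R) R <;> simp [hx]
    · intro x hx
      exact Set.indicator_of_notMem (fun h => by linarith [h.2]) _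
    · intro x hx
      exact Set.indicator_of_notMem (fun h => by linarith [h.1]) _
  · intro φ hφ hc
    have hφn : ContDiff ℝ (⊤ : ℕ∞) (fun x => φ (-x)) := hφ.comp contDiff_neg
    have hcn : HasCompactSupport (fun x => φ (-x)) :=
      hc.comp_homeomorph (Homeomorph.neg ℝ)
    obtain ⟨R, M, hM, hR⟩ := compact_bounds φ hφ hc
    obtain ⟨R', M', hM', hR'⟩ := compact_bounds _ hφn hcn
    obtain ⟨N, hN⟩ := exists_nat_gt (β / α)
    rw [div_lt_iff₀ hα] at hN
    obtain ⟨C1, h1⟩ := II_bound α hα N (-β) (by linarith) φ hφ hc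
    obtain ⟨C2, h2⟩ := II_bound α hα N (-β) (by linarith) _ hφn hcn
    have hlim : Tendsto (fun ε : ℝ => |ε| ^ (N * α - β) * (C1 + C2)) (𝓝[≠] 0) (𝓝 0) := by
      have h : ContinuousAt (fun x : ℝ => |x| ^ (N * α - β) * (C1 + C2)) 0 :=
        (continuousAt_id.abs.rpow_const (Or.inr (by linarith))).mul continuousAt_const
      have h2 := h.tendsto
      rw [abs_zero, Real.zero_rpow (by linarith), zero_mul] at h2
      exact h2.mono_left nhdsWithin_le_nhds
    rw [tendsto_zero_iff_norm_tendsto_zero]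
    refine squeeze_zero' (Eventually.of_forall fun _ => norm_nonneg _) ?_ hlim
    filter_upwards [self_mem_nhdsWithin] with ε hε
    have hε : ε ≠ 0 := hε
    have ha : 0 < |ε| := abs_pos.2 hε
    rw [(hsplit ε (max R R') M φ hε hφ.continuous.measurable hM
      (fun x hx => hR x ((le_max_left _ _).trans_lt hx))
      (fun x hx => hR' x ((le_max_right _ _).trans_lt hx))).2]
    have hL : 0 < |ε| ^ (-α) := Real.rpow_pos_of_pos ha _
    have b1 := h1 _ hL
    have b2 := h2 _ hL
    have e1 : |ε| ^ (-β) = |ε| ^ (N * α - β) * (|ε| ^ (-α)) ^ N := by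
      rw [← Real.rpow_natCast, ← Real.rpow_mul ha.le, ← Real.rpow_add ha]
      congr 1; ring
    rw [norm_mul, Complex.norm_real, Real.norm_of_nonneg (by positivity)]
    calc _ ≤ |ε| ^ (-β) * (‖II α (-β) (|ε| ^ (-α)) φ‖ +
          ‖II α (-β) (|ε| ^ (-α)) (fun x => φ (-x))‖) := by
          gcongr
          exact norm_add_le _ _
      _ = |ε| ^ (N * α - β) * ((|ε| ^ (-α)) ^ N * ‖II α (-β) (|ε| ^ (-α)) φ‖ +
          (|ε| ^ (-α)) ^ N * ‖II α (-β) (|ε| ^ (-α)) (fun x => φ (-x))‖) := by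
          rw [e1]; ring
      _ ≤ _ := by gcongr
end
end
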